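/- arXiv:2312.01359 — 3 statements merged into one kernel-verified Lean document; each statement's English description precedes it below -/
import Mathlib

section
/- Let T be a string of length n ≥ 2 over a linearly ordered alphabet Σ whose last character occurs exactly once in T, and let r̄ be the number of runs of BWT(reverse(T)). Then there exists a suffixient set for T of cardinality at most 2·r̄; equivalently, χ ≤ 2·r̄ where χ is the minimum cardinality of a suffixient set for T. -/
/-- The 1-based (inclusive) substring `T[i..j]` of a string `T`. -/
def Substr {A : Type*} (T : List A) (i j : ℕ) : List A := (T.take j).drop (i - 1)

/-- A string `w` (possibly empty) is right-maximal in `T` if there are two distinct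
characters `c ≠ c'` such that both `w·c` and `w·c'` occur (as substrings) in `T`. -/
def RightMaximal {A : Type*} (T w : List A) : Prop :=
  ∃ c c' : A, c ≠ c' ∧ (w ++ [c]) <:+: T ∧ (w ++ [c']) <:+: T

/-- `S ⊆ {1,…,n}` is suffixient for `T` if for every right-maximal string `w` in `T`
and every character `c` such that `w·c` occurs in `T`, there is `s ∈ S` such that
`w·c` is a suffix of `T[1..s]`. -/
def IsSuffixient {A : Type*} (T : List A) (S : Finset ℕ) : Prop :=
  (∀ s ∈ S, 1 ≤ s ∧ s ≤ T.length) ∧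
  ∀ (w : List A) (c : A), RightMaximal T w → (w ++ [c]) <:+: T →
    ∃ s ∈ S, (w ++ [c]) <:+ T.take s

/-- The rotation start offsets `0, …, n−1` of `W`, sorted so that the corresponding
cyclic rotations of `W` are in (non-decreasing, hence for distinct rotations increasing)
lexicographic order.  The `j`-th (1-based) lexicographically smallest rotation of `W`
is `W.rotate ((sortedRotIdx W).getD (j-1) 0)`. -/
def sortedRotIdx {A : Type*} [LinearOrder A] (W : List A) : List ℕ :=
  List.insertionSort (fun a b => W.rotate a ≤ W.rotate b) (List.range W.length)

/-- The Burrows–Wheeler transform of `W`: the `j`-th entry is the last character of the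
`j`-th lexicographically smallest cyclic rotation of `W` (as an `Option`, which is
always `some` when `W` is nonempty). -/
def BWT {A : Type*} [LinearOrder A] (W : List A) : List (Option A) :=
  (sortedRotIdx W).map (fun k => (W.rotate k).getLast?)

/-- The number of runs (maximal blocks of consecutive equal characters) of a string. -/
def runsCount {B : Type*} [DecidableEq B] (L : List B) : ℕ :=
  (L.destutter (· ≠ ·)).length

/-- `j` (1-based) is the first or the last position of some run of `L`. -/
def IsRunBoundary {B : Type*} (L : List B) (j : ℕ) : Prop :=
  1 ≤ j ∧ j ≤ L.length ∧
    (j = 1 ∨ L[j-2]? ≠ L[j-1]? ∨ j = L.length ∨ L[j-1]? ≠ L[j]?)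

instance {B : Type*} [DecidableEq B] (L : List B) : DecidablePred (IsRunBoundary L) :=
  fun j => by unfold IsRunBoundary; infer_instance

/-- If the `j`-th (1-based) lexicographically smallest rotation of `W = reverse T`
starts at (1-based) index `i` of `W`, then `pos(j) = 1` if `i = 1` and
`pos(j) = n − i + 2` otherwise; with this definition `T[pos(j)]` is the `j`-th
character of `BWT W`. -/
def posOf {A : Type*} [LinearOrder A] (W : List A) (j : ℕ) : ℕ :=
  if (sortedRotIdx W).getD (j-1) 0 = 0 then 1
  else W.length - (sortedRotIdx W).getD (j-1) 0 + 1

/-! The lexicographically sorted rotations of `reverse T` that start with `reverse w` are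
consecutive, and their last characters are the characters following the occurrences of `w` in `T`.
If `w` is right-maximal, this block of the Burrows–Wheeler transform is not constant, so every
character `c` in it is found in the block at the first or last position of a run. That position
comes from an occurrence of `w·c` in `T`, because an occurrence of `w` wrapping around the end
of `T` would contain the unique last character. Hence the text positions of the run boundaries,
at most two per run, form a suffixient set. -/

section Lists

variable {A : Type*}

theorem concat_suffix_take_succ_iff {T w : List A} {c : A} {m : ℕ} (hm : m < T.length) :
    w ++ [c] <:+ T.take (m + 1) ↔ w <:+ T.take m ∧ T[m]? = some c := by
  rw [List.take_succ_eq_append_getElem hm,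
    List.suffix_append_inj_of_length_eq (s₁ := [c]) (s₂ := [T[m]]) rfl,
    List.getElem?_eq_getElem hm, Option.some_inj, List.singleton_inj, eq_comm]

theorem exists_concat_suffix_take_of_infix {T w : List A} {c : A} (h : w ++ [c] <:+: T) :
    ∃ m < T.length, w ++ [c] <:+ T.take (m + 1) := by
  obtain ⟨p, q, rfl⟩ := h
  refine ⟨(p ++ w).length, by simp, ?_⟩
  have hlen : (p ++ w).length + 1 = (p ++ (w ++ [c])).length := by simp [add_assoc]
  rw [hlen, List.take_left]
  exact List.suffix_append _ _

theorem suffix_append_iff_of_getLast_notMem {u v w : List A} (hu : u ≠ [])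
    (hw : u.getLast hu ∉ w) : w <:+ u ++ v ↔ w <:+ v := by
  refine ⟨fun h => ?_, fun h => h.trans (List.suffix_append _ _)⟩
  rcases Nat.lt_or_ge v.length w.length with hlt | hle
  · have hcons : u.getLast hu :: v <:+ u ++ v :=
      ⟨u.dropLast, by rw [List.append_cons, List.dropLast_append_getLast]⟩
    have hsub : u.getLast hu :: v <:+ w := List.suffix_of_suffix_length_le hcons h hlt
    exact absurd (hsub.subset List.mem_cons_self) hw
  · exact List.suffix_of_suffix_length_le h (List.suffix_append _ _) hle

theorem suffix_rotate_iff_of_getLast_notMem {T w : List A} (hne : T ≠ [])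
    (hw : T.getLast hne ∉ w) {m : ℕ} (hm : m < T.length) :
    w <:+ T.rotate m ↔ w <:+ T.take m := by
  have hdrop : T.drop m ≠ [] := by simpa using hm
  rw [List.rotate_eq_drop_append_take hm.le]
  exact suffix_append_iff_of_getLast_notMem hdrop (by rwa [List.getLast_drop])

theorem getLast_notMem_of_concat_infix [BEq A] [LawfulBEq A] {T w : List A} {c : A} (hne : T ≠ [])
    (hlast : T.count (T.getLast hne) = 1) (h : w ++ [c] <:+: T) : T.getLast hne ∉ w := by
  obtain ⟨m, hm, hwc⟩ := exists_concat_suffix_take_of_infix h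
  have hw : w <:+ T.take m := ((concat_suffix_take_succ_iff hm).1 hwc).1
  have hdrop : T.getLast hne ∈ T.drop m := by
    rw [← List.getLast_drop (by simpa using hm)]
    exact List.getLast_mem _
  intro hmem
  have hcount : (T.take m).count (T.getLast hne) + (T.drop m).count (T.getLast hne) = 1 := by
    rw [← List.count_append, List.take_append_drop, hlast]
  have htake_pos := List.count_pos_iff.2 (hw.subset hmem)
  have hdrop_pos := List.count_pos_iff.2 hdrop
  omega

theorem RightMaximal.exists_ne {T w : List A} (h : RightMaximal T w) (c : A) :
    ∃ c', c' ≠ c ∧ w ++ [c'] <:+: T := by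
  obtain ⟨a, b, hab, ha, hb⟩ := h
  by_cases hac : a = c
  · exact ⟨b, hac ▸ hab.symm, hb⟩
  · exact ⟨a, hac, ha⟩

theorem ordConnected_setOf_prefix [LinearOrder A] (v : List A) :
    {x : List A | v <+: x}.OrdConnected := by
  refine ⟨?_⟩
  induction v with
  | nil => exact fun _ _ _ _ _ _ => List.nil_prefix
  | cons a v ih =>
    rintro _ ⟨x, rfl⟩ _ ⟨z, rfl⟩ y ⟨hxy, hyz⟩
    cases y with
    | nil => exact absurd hxy (by simp)
    | cons b y =>
      simp only [List.cons_append, ← not_lt, List.cons_lt_cons_iff, not_or, not_and] at hxy hyz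
      obtain rfl : a = b := le_antisymm (not_lt.1 hxy.1) (not_lt.1 hyz.1)
      have hy : v <+: y := ih (List.prefix_append v x) (List.prefix_append v z)
        ⟨not_lt.1 (hxy.2 rfl), not_lt.1 (hyz.2 rfl)⟩
      exact List.cons_prefix_cons.2 ⟨rfl, hy⟩

end Lists

section Runs

variable {B : Type*}

theorem exists_isRunBoundary_mem_uIcc {L : List B} {x : B} {i j : ℕ}
    (hi : i ∈ Set.Icc 1 L.length) (hj : j ∈ Set.Icc 1 L.length)
    (hix : L[i - 1]? = some x) (hjx : L[j - 1]? ≠ some x) :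
    ∃ k ∈ Set.uIcc i j, IsRunBoundary L k ∧ L[k - 1]? = some x := by
  rcases le_total i j with hij | hji
  · rw [Set.uIcc_of_le hij]
    induction j, hij using Nat.le_induction with
    | base => exact absurd hix hjx
    | succ j hij ih =>
      have hj' : j ∈ Set.Icc 1 L.length := ⟨hi.1.trans hij, j.le_succ.trans hj.2⟩
      by_cases hx : L[j - 1]? = some x
      · have hend : L[j - 1]? ≠ L[j]? := fun h => hjx (h.symm.trans hx)
        exact ⟨j, ⟨hij, j.le_succ⟩, ⟨hj'.1, hj'.2, .inr <| .inr <| .inr hend⟩, hx⟩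
      · obtain ⟨k, hk, hboundary⟩ := ih hj' hx
        exact ⟨k, ⟨hk.1, hk.2.trans j.le_succ⟩, hboundary⟩
  · rw [Set.uIcc_of_ge hji]
    induction i, hji using Nat.le_induction with
    | base => exact absurd hix hjx
    | succ i hji ih =>
      have hi' : i ∈ Set.Icc 1 L.length := ⟨hj.1.trans hji, i.le_succ.trans hi.2⟩
      by_cases hx : L[i - 1]? = some x
      · obtain ⟨k, hk, hboundary⟩ := ih hi' hx
        exact ⟨k, ⟨hk.1, hk.2.trans i.le_succ⟩, hboundary⟩
      · have hstart : L[i - 1]? ≠ L[i]? := fun h => hx (h.trans hix)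
        exact ⟨i + 1, ⟨hji.trans i.le_succ, le_rfl⟩,
          ⟨hi.1, hi.2, .inr <| .inl hstart⟩, hix⟩

variable [DecidableEq B]

/-- The 1-based positions of a string that are the first or the last of some run. -/
def runBoundaries (L : List B) : Finset ℕ :=
  {j ∈ Finset.Icc 1 L.length | IsRunBoundary L j}

theorem mem_runBoundaries {L : List B} {j : ℕ} : j ∈ runBoundaries L ↔ IsRunBoundary L j := by
  rw [runBoundaries, Finset.mem_filter, Finset.mem_Icc]
  exact and_iff_right_of_imp fun h => ⟨h.1, h.2.1⟩

theorem runsCount_cons (a : B) (L : List B) :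
    runsCount (a :: L) = runsCount L + if some a ≠ L.head? then 1 else 0 := by
  cases L with
  | nil => simp [runsCount]
  | cons b L =>
    by_cases hab : a = b
    · subst hab
      simp [runsCount, List.destutter_cons']
    · simp [runsCount, List.destutter_cons', List.destutter'_cons_pos, hab]

/-- The out-of-range value `none` makes the last position of `L` count as the end of a run. -/
theorem count_getElem?_ne_succ_eq_runsCount (L : List B) :
    Nat.count (fun i => L[i]? ≠ L[i + 1]?) L.length = runsCount L := by
  induction L with
  | nil => rfl
  | cons a L ih =>
    rw [List.length_cons, Nat.count_succ', runsCount_cons, ← ih]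
    simp [List.head?_eq_getElem?]

theorem card_runBoundaries_le (L : List B) : (runBoundaries L).card ≤ 2 * runsCount L := by
  set ends : Finset ℕ := {i ∈ Finset.range L.length | L[i]? ≠ L[i + 1]?} with hends
  have hcard : ends.card = runsCount L := by
    rw [hends, ← Nat.count_eq_card_filter_range, count_getElem?_ne_succ_eq_runsCount]
  have hmem {i : ℕ} (hi : i < L.length) (h : L[i]? ≠ L[i + 1]?) : i ∈ ends :=
    Finset.mem_filter.2 ⟨Finset.mem_range.2 hi, h⟩
  -- A run starts right after the end of the cyclically preceding run.
  have hsub : runBoundaries L ⊆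
      ends.image (· + 1) ∪ ends.image fun i => (i + 1) % L.length + 1 := by
    intro j hj
    obtain ⟨hj1, hjL, hcase⟩ := mem_runBoundaries.1 hj
    obtain ⟨i, rfl⟩ : ∃ i, j = i + 1 := ⟨j - 1, by omega⟩
    have hlast : L.length - 1 ∈ ends := hmem (by omega) (by
      rw [Nat.sub_add_cancel (by omega), List.getElem?_eq_getElem (by omega)]; simp)
    rw [Finset.mem_union, Finset.mem_image, Finset.mem_image]
    rcases hcase with hfirst | hstart | hend | hend
    · exact .inr ⟨_, hlast, by rw [Nat.sub_add_cancel (by omega), Nat.mod_self]; omega⟩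
    · have hi : i ≠ 0 := by rintro rfl; exact hstart rfl
      obtain ⟨i, rfl⟩ := Nat.exists_eq_succ_of_ne_zero hi
      exact .inr ⟨i, hmem (by omega) hstart, by rw [Nat.mod_eq_of_lt (by omega)]⟩
    · exact .inl ⟨_, hlast, by omega⟩
    · exact .inl ⟨i, hmem (by omega) hend, rfl⟩
  calc (runBoundaries L).card
      ≤ (ends.image (· + 1)).card + (ends.image fun i => (i + 1) % L.length + 1).card :=
        (Finset.card_le_card hsub).trans (Finset.card_union_le _ _)
    _ ≤ ends.card + ends.card := add_le_add Finset.card_image_le Finset.card_image_le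
    _ = 2 * runsCount L := by rw [hcard, two_mul]

end Runs

section BurrowsWheeler

variable {A : Type*} [LinearOrder A]

/-- The `j`-th lexicographically smallest rotation of `W`, with `j` counted from 1 as in `posOf`
and `IsRunBoundary`. -/
def sortedRot (W : List A) (j : ℕ) : List A :=
  W.rotate ((sortedRotIdx W).getD (j - 1) 0)

theorem sortedRotIdx_perm (W : List A) : (sortedRotIdx W).Perm (List.range W.length) :=
  List.perm_insertionSort _ _

theorem length_sortedRotIdx (W : List A) : (sortedRotIdx W).length = W.length := by
  simpa using (sortedRotIdx_perm W).length_eq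

theorem sub_one_lt_length_sortedRotIdx {W : List A} {j : ℕ} (hj : j ∈ Set.Icc 1 W.length) :
    j - 1 < (sortedRotIdx W).length := by
  rw [length_sortedRotIdx]
  exact Nat.sub_one_lt_of_le hj.1 hj.2

theorem sortedRotIdx_getD_lt {W : List A} {j : ℕ} (hj : j ∈ Set.Icc 1 W.length) :
    (sortedRotIdx W).getD (j - 1) 0 < W.length := by
  have hlt := sub_one_lt_length_sortedRotIdx hj
  rw [List.getD_eq_getElem _ _ hlt, ← List.mem_range, ← (sortedRotIdx_perm W).mem_iff]
  exact List.getElem_mem hlt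

theorem length_BWT (W : List A) : (BWT W).length = W.length := by
  rw [BWT, List.length_map, length_sortedRotIdx]

theorem getElem?_BWT {W : List A} {j : ℕ} (hj : j ∈ Set.Icc 1 W.length) :
    (BWT W)[j - 1]? = some (sortedRot W j).getLast? := by
  have hlt := sub_one_lt_length_sortedRotIdx hj
  rw [BWT, sortedRot, List.getElem?_map, List.getElem?_eq_getElem hlt,
    List.getD_eq_getElem _ _ hlt, Option.map_some]

theorem monotoneOn_sortedRot (W : List A) : MonotoneOn (sortedRot W) (Set.Icc 1 W.length) := by
  intro i hi j hj hij
  have : Std.Total fun a b : ℕ => W.rotate a ≤ W.rotate b := ⟨fun _ _ => le_total _ _⟩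
  have : IsTrans ℕ fun a b => W.rotate a ≤ W.rotate b := ⟨fun _ _ _ => le_trans⟩
  have hsorted : (sortedRotIdx W).Pairwise fun a b => W.rotate a ≤ W.rotate b :=
    List.pairwise_insertionSort _ _
  obtain rfl | hlt := hij.eq_or_lt
  · exact le_rfl
  have hi' := sub_one_lt_length_sortedRotIdx hi
  have hj' := sub_one_lt_length_sortedRotIdx hj
  rw [sortedRot, sortedRot, List.getD_eq_getElem _ _ hi', List.getD_eq_getElem _ _ hj']
  exact List.pairwise_iff_getElem.1 hsorted _ _ hi' hj' (Nat.sub_lt_sub_right hi.1 hlt)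

theorem prefix_sortedRot_of_mem_uIcc {W v : List A} {i j k : ℕ} (hi : i ∈ Set.Icc 1 W.length)
    (hj : j ∈ Set.Icc 1 W.length) (hk : k ∈ Set.uIcc i j) (hvi : v <+: sortedRot W i)
    (hvj : v <+: sortedRot W j) : v <+: sortedRot W k :=
  (ordConnected_setOf_prefix v).uIcc_subset hvi hvj <|
    ((monotoneOn_sortedRot W).mono (Set.ordConnected_Icc.uIcc_subset hi hj)).mapsTo_uIcc hk

theorem posOf_mem_Icc {W : List A} {j : ℕ} (hj : j ∈ Set.Icc 1 W.length) :
    posOf W j ∈ Set.Icc 1 W.length := by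
  have hlt := sortedRotIdx_getD_lt hj
  rw [posOf, Set.mem_Icc]
  split_ifs <;> omega

theorem surjOn_posOf (W : List A) :
    Set.SurjOn (posOf W) (Set.Icc 1 W.length) (Set.Icc 1 W.length) := by
  rintro s ⟨hs1, hs⟩
  obtain ⟨k, hk, hks⟩ : ∃ k < W.length, (if k = 0 then 1 else W.length - k + 1) = s := by
    obtain rfl | hs1 := hs1.eq_or_lt
    · exact ⟨0, by omega, if_pos rfl⟩
    · exact ⟨W.length + 1 - s, by omega, by rw [if_neg (by omega)]; omega⟩
  have hmem : k ∈ sortedRotIdx W := (sortedRotIdx_perm W).mem_iff.2 (List.mem_range.2 hk)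
  obtain ⟨i, hi, rfl⟩ := List.getElem_of_mem hmem
  refine ⟨i + 1, ⟨by omega, by rwa [← length_sortedRotIdx]⟩, ?_⟩
  rw [posOf, Nat.add_sub_cancel, List.getD_eq_getElem _ _ hi, hks]

theorem sortedRot_reverse {T : List A} {j : ℕ} (hj : j ∈ Set.Icc 1 T.length) :
    sortedRot T.reverse j = (T.rotate (posOf T.reverse j - 1)).reverse := by
  have hlt := sortedRotIdx_getD_lt (W := T.reverse) (by rwa [List.length_reverse])
  rw [List.length_reverse] at hlt
  rw [sortedRot, posOf, List.rotate_reverse, Nat.mod_eq_of_lt hlt, List.length_reverse]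
  split_ifs with hzero
  · rw [hzero, Nat.sub_zero, List.rotate_length, Nat.sub_self, List.rotate_zero]
  · rw [Nat.add_sub_cancel]

theorem concat_suffix_take_posOf_iff {T w : List A} (hne : T ≠ []) (hw : T.getLast hne ∉ w)
    {j : ℕ} (hj : j ∈ Set.Icc 1 T.length) (c : A) :
    w ++ [c] <:+ T.take (posOf T.reverse j) ↔
      w.reverse <+: sortedRot T.reverse j ∧ (BWT T.reverse)[j - 1]? = some (some c) := by
  have hj' : j ∈ Set.Icc 1 T.reverse.length := by rwa [List.length_reverse]
  obtain ⟨hpos, hpos_le⟩ := posOf_mem_Icc hj'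
  rw [List.length_reverse] at hpos_le
  rw [getElem?_BWT hj', sortedRot_reverse hj]
  obtain ⟨m, hm⟩ : ∃ m, posOf T.reverse j = m + 1 := Nat.exists_eq_add_of_le' hpos
  have hmT : m < T.length := by omega
  rw [hm, Nat.add_sub_cancel, concat_suffix_take_succ_iff hmT, List.reverse_prefix,
    suffix_rotate_iff_of_getLast_notMem hne hw hmT, List.getLast?_reverse,
    List.head?_rotate hmT, Option.some_inj]

theorem exists_sortedRot_of_concat_infix {T w : List A} {c : A} (hne : T ≠ [])
    (hw : T.getLast hne ∉ w) (h : w ++ [c] <:+: T) :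
    ∃ j ∈ Set.Icc 1 T.length,
      w.reverse <+: sortedRot T.reverse j ∧ (BWT T.reverse)[j - 1]? = some (some c) := by
  obtain ⟨m, hm, hsuffix⟩ := exists_concat_suffix_take_of_infix h
  obtain ⟨j, hj, hpos⟩ := surjOn_posOf T.reverse (a := m + 1)
    ⟨m.succ_pos, by rwa [List.length_reverse]⟩
  rw [List.length_reverse] at hj
  rw [← hpos] at hsuffix
  exact ⟨j, hj, (concat_suffix_take_posOf_iff hne hw hj c).1 hsuffix⟩

theorem isSuffixient_image_posOf_runBoundaries (T : List A) (hne : T ≠ [])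
    (hlast : T.count (T.getLast hne) = 1) :
    IsSuffixient T ((runBoundaries (BWT T.reverse)).image (posOf T.reverse)) := by
  have hlen : (BWT T.reverse).length = T.length := by rw [length_BWT, List.length_reverse]
  constructor
  · intro s hs
    obtain ⟨j, hj, rfl⟩ := Finset.mem_image.1 hs
    obtain ⟨hj1, hjn, -⟩ := mem_runBoundaries.1 hj
    rw [length_BWT] at hjn
    simpa using posOf_mem_Icc (Set.mem_Icc.2 ⟨hj1, hjn⟩)
  · intro w c hmax hc
    obtain ⟨c', hc'c, hc'⟩ := hmax.exists_ne c
    have hw : T.getLast hne ∉ w := getLast_notMem_of_concat_infix hne hlast hc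
    obtain ⟨i, hi, hwi, hBi⟩ := exists_sortedRot_of_concat_infix hne hw hc
    obtain ⟨j, hj, hwj, hBj⟩ := exists_sortedRot_of_concat_infix hne hw hc'
    obtain ⟨k, hk, hboundary, hBk⟩ := exists_isRunBoundary_mem_uIcc (L := BWT T.reverse)
      (by rwa [hlen]) (by rwa [hlen]) hBi (j := j) (by simpa [hBj] using hc'c)
    have hkT : k ∈ Set.Icc 1 T.length := ⟨hboundary.1, hboundary.2.1.trans_eq hlen⟩
    have hwk : w.reverse <+: sortedRot T.reverse k :=
      prefix_sortedRot_of_mem_uIcc (by rwa [List.length_reverse]) (by rwa [List.length_reverse])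
        hk hwi hwj
    exact ⟨_, Finset.mem_image_of_mem _ (mem_runBoundaries.2 hboundary),
      (concat_suffix_take_posOf_iff hne hw hkT c).2 ⟨hwk, hBk⟩⟩

end BurrowsWheeler

/-- There is a suffixient set for `T` of cardinality at most `2·r̄`, where `r̄` is the
number of runs of `BWT(reverse T)`; equivalently `χ ≤ 2·r̄` where `χ` is the minimum
cardinality of a suffixient set for `T`. -/
theorem exists_suffixient_le_two_rbar {A : Type*} [LinearOrder A] (T : List A)
    (hne : T ≠ []) (hn : 2 ≤ T.length)
    (hlast : T.count (T.getLast hne) = 1) :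
    (∃ S : Finset ℕ, IsSuffixient T S ∧ S.card ≤ 2 * runsCount (BWT T.reverse)) ∧
    sInf {k : ℕ | ∃ S : Finset ℕ, IsSuffixient T S ∧ S.card = k} ≤
      2 * runsCount (BWT T.reverse) := by
  set S := (runBoundaries (BWT T.reverse)).image (posOf T.reverse)
  have hS : IsSuffixient T S := isSuffixient_image_posOf_runBoundaries T hne hlast
  have hcard : S.card ≤ 2 * runsCount (BWT T.reverse) :=
    Finset.card_image_le.trans (card_runBoundaries_le _)
  exact ⟨⟨S, hS, hcard⟩, le_trans (Nat.sInf_le ⟨S, hS, rfl⟩) hcard⟩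
end

section
/- Let T be a string of length n ≥ 2 over an alphabet Σ whose last character occurs exactly once in T (so T contains at least two distinct characters and the empty string is right-maximal in T). Let w be a nonempty string that occurs in T, let α be the longest proper prefix of w that is right-maximal in T (α exists, since the empty string is a right-maximal proper prefix of w), and let c be the character of w at position |α|+1. Then every occurrence of α·c in T extends to an occurrence of w: for every position i with T[i..i+|α|] = α·c, we have i + |w| − 1 ≤ n and T[i..i+|w|−1] = w. -/
section Lists

variable {A : Type*}

theorem prefix_or_concat_prefix_or_exists_branch (l₁ l₂ : List A) :
    l₁ <+: l₂ ∨ (∃ x, l₂ ++ [x] <+: l₁) ∨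
      ∃ p x y, x ≠ y ∧ p ++ [x] <+: l₁ ∧ p ++ [y] <+: l₂ := by
  induction l₁ generalizing l₂ with
  | nil => exact .inl List.nil_prefix
  | cons x l₁ ih =>
    rcases l₂ with _ | ⟨y, l₂⟩
    · exact .inr (.inl ⟨x, by simp⟩)
    by_cases hxy : x = y
    · subst hxy
      rcases ih l₂ with h | ⟨z, h⟩ | ⟨p, z, z', hz, h, h'⟩
      · exact .inl (by simpa using h)
      · exact .inr (.inl ⟨z, by simpa using h⟩)
      · exact .inr (.inr ⟨x :: p, z, z', hz, by simpa using h, by simpa using h'⟩)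
    · exact .inr (.inr ⟨[], x, y, hxy, by simp, by simp⟩)

theorem infix_dropLast_of_concat_infix {l T : List A} {x : A} (h : l ++ [x] <:+: T) :
    l <:+: T.dropLast := by
  obtain ⟨s, t, rfl⟩ := h
  exact ⟨s, (x :: t).dropLast, by simp⟩

theorem not_concat_infix_of_suffix {T l : List A} (hT : T ≠ [])
    (hlast : T.getLast hT ∉ T.dropLast) (hl : l ≠ []) (hlT : l <:+ T) (x : A) :
    ¬ l ++ [x] <:+: T := fun h =>
  hlast <| (infix_dropLast_of_concat_infix h).subset (hlT.getLast hl ▸ List.getLast_mem hl)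

theorem getLast_notMem_dropLast_of_count_eq_one [DecidableEq A] {T : List A} (hT : T ≠ [])
    (h : T.count (T.getLast hT) = 1) : T.getLast hT ∉ T.dropLast := by
  have hsplit := congrArg (List.count (T.getLast hT)) (List.dropLast_append_getLast hT)
  rw [List.count_append, List.count_singleton_self] at hsplit
  exact List.count_eq_zero.mp (by omega)

end Lists

theorem prefix_of_forall_not_rightMaximal {A : Type*} {T u w D : List A} (hT : T ≠ [])
    (hlast : T.getLast hT ∉ T.dropLast) (hw : w <:+: T) (hD : D <:+ T) (hu : u ≠ [])
    (huw : u <+: w) (huD : u <+: D)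
    (hmax : ∀ p, u <+: p → p <+: w → p.length < w.length → ¬ RightMaximal T p) :
    w <+: D := by
  obtain ⟨v, rfl⟩ := huw
  obtain ⟨e, rfl⟩ := huD
  have occurs_of_prefix {q : List A} (hq : q <+: v) : u ++ q <:+: T :=
    ((List.prefix_append_right_inj u).mpr hq).isInfix.trans hw
  rcases prefix_or_concat_prefix_or_exists_branch v e with hve | ⟨x, hx⟩ | ⟨p, x, y, hxy, hx, hy⟩
  · exact (List.prefix_append_right_inj u).mpr hve
  · have hne : u ++ e ≠ [] := List.append_ne_nil_of_left_ne_nil hu e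
    have hex : u ++ e ++ [x] <:+: T := by simpa using occurs_of_prefix hx
    exact absurd hex (not_concat_infix_of_suffix hT hlast hne hD x)
  · have hpx : u ++ p ++ [x] <:+: T := by simpa using occurs_of_prefix hx
    have hpy : u ++ p ++ [y] <:+: T := by
      simpa using ((List.prefix_append_right_inj u).mpr hy).isInfix.trans hD.isInfix
    have hpv : p <+: v := (List.prefix_append p [x]).trans hx
    have hlt : (u ++ p).length < (u ++ v).length := by simpa using hx.length_le
    exact absurd ⟨x, y, hxy, hpx, hpy⟩ <|
      hmax (u ++ p) (List.prefix_append u p) ((List.prefix_append_right_inj u).mpr hpv) hlt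

/-- Let `w` be a nonempty string occurring in `T`, let `a` be the longest proper prefix
of `w` that is right-maximal in `T`, and let `c` be the character of `w` at position
`|a|+1` (so `a·c` is a prefix of `w`).  Then every occurrence of `a·c` in `T` extends
to an occurrence of `w`: if `T[i..i+|a|] = a·c` (1-based position `i`), then
`i + |w| − 1 ≤ n` and `T[i..i+|w|−1] = w`. -/
theorem occurrence_extends {A : Type*} [DecidableEq A] (T : List A)
    (hne : T ≠ []) (hn : 2 ≤ T.length)
    (hlast : T.count (T.getLast hne) = 1)
    (w : List A) (hw : w ≠ []) (hwocc : w <:+: T)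
    (a : List A) (c : A)
    (hac : a ++ [c] <+: w)
    (hrm : RightMaximal T a)
    (hmax : ∀ b : List A, b <+: w → b.length < w.length → RightMaximal T b →
      b.length ≤ a.length)
    (i : ℕ) (hi : 1 ≤ i)
    (hocc : (T.drop (i - 1)).take (a.length + 1) = a ++ [c]) :
    i + w.length - 1 ≤ T.length ∧ (T.drop (i - 1)).take w.length = w := by
  have hwD : w <+: T.drop (i - 1) := by
    refine prefix_of_forall_not_rightMaximal hne
      (getLast_notMem_dropLast_of_count_eq_one hne hlast) hwocc (List.drop_suffix _ _)
      (List.append_ne_nil_of_right_ne_nil a (List.cons_ne_nil c [])) hac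
      (hocc ▸ List.take_prefix _ _) fun p hap hpw hlt hp => ?_
    have hlong : a.length + 1 ≤ p.length := by simpa using hap.length_le
    exact absurd (hmax p hpw hlt hp) (by omega)
  have hlen : w.length ≤ T.length - (i - 1) := by simpa using hwD.length_le
  have hpos : 0 < w.length := List.length_pos_iff.mpr hw
  exact ⟨by omega, (List.prefix_iff_eq_take.mp hwD).symm⟩
end

section
/- Let T be a string of length n ≥ 2 over an alphabet Σ whose last character occurs exactly once in T, let S be a suffixient set for T, and let P[1..m] (m ≥ 1) be a pattern every character of which occurs in T. Then the MEM-finding algorithm run on P, T and S terminates, and the pairs (i′, j′) it reports are exactly the pairs such that P[i′..j′] is a MEM of P with respect to T, each MEM being reported exactly once; this holds for every choice of maximizer j ∈ S made at each iteration. -/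
/-- `LCP(x, y)`: the length of the longest common prefix of `x` and `y`. -/
def lcp {A : Type*} [DecidableEq A] : List A → List A → ℕ
  | a :: x, b :: y => if a = b then lcp x y + 1 else 0
  | _, _ => 0

/-- `LCS(x, y)`: the length of the longest common suffix of `x` and `y`. -/
def lcs {A : Type*} [DecidableEq A] (x y : List A) : ℕ := lcp x.reverse y.reverse

/-- The length of the longest suffix of `x` that occurs (as a substring) in `T`. -/
def maxSufLen {A : Type*} [DecidableEq A] (x T : List A) : ℕ :=
  Nat.findGreatest (fun k => x.drop (x.length - k) <:+: T) x.length

/-- The longest suffix of `x` that occurs (as a substring) in `T`. -/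
def longestSufOcc {A : Type*} [DecidableEq A] (x T : List A) : List A :=
  x.drop (x.length - maxSufLen x T)

/-- `P[i..j]` (1-based, `1 ≤ i ≤ j ≤ m`) is a maximal exact match (MEM) of `P` with
respect to `T`: it occurs in `T`, it cannot be extended to the left
(`i = 1` or `P[i−1..j]` does not occur in `T`), and it cannot be extended to the right
(`j = m` or `P[i..j+1]` does not occur in `T`). -/
def IsMEM {A : Type*} (T P : List A) (i j : ℕ) : Prop :=
  1 ≤ i ∧ i ≤ j ∧ j ≤ P.length ∧
  Substr P i j <:+: T ∧
  (i = 1 ∨ ¬ Substr P (i - 1) j <:+: T) ∧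
  (j = P.length ∨ ¬ Substr P i (j + 1) <:+: T)

/-- A run of the MEM-finding algorithm starting at the top of the while-loop with
current position `i` and current length `ℓ`, where `ch i ℓ` is the element of `S`
chosen at the iteration with state `(i, ℓ)`.  It returns the list of reported pairs,
in order.  (Totality of this definition is exactly termination of the algorithm.) -/
def runAlg {A : Type*} [DecidableEq A] (T P : List A) (ch : ℕ → ℕ → ℕ) :
    ℕ → ℕ → List (ℕ × ℕ)
  | i, ℓ =>
    if h : i ≤ P.length then
      let j := ch i ℓ
      let b := lcs (P.take i) (T.take j)
      let f := lcp (P.drop i) (T.drop j)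
      (if b ≤ ℓ then [(i - ℓ, i - 1)] else []) ++ runAlg T P ch (i + f + 1) (b + f)
    else [(i - ℓ, i - 1)]
  termination_by i _ => P.length + 1 - i
  decreasing_by omega

/-! Let `L j` be the length of the longest suffix of `P[1..j]` that occurs in `T`. The MEMs of `P`
are exactly the `P[j + 1 - L j..j]` with `L j > 0` and either `j = m` or `L (j + 1) ≤ L j`.
At the top of the loop, `ℓ = L (i - 1)` and some occurrence in `T` of the corresponding suffix of
`P[1..i-1]` is not followed by `P[i]`. Hence every suffix `w` of `P[1..i-1]` for which `w · P[i]`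
occurs in `T` is right-maximal, so suffixiency gives `b = L i`. While the matched suffix is extended
by `f` characters, `L` grows by one at each step, so no MEM ends there; the extension stops at the
next mismatch. -/

section CommonPrefixSuffix

variable {A : Type*} [DecidableEq A]

theorem length_le_lcp_iff {w x y : List A} (hw : w <+: x) : w.length ≤ lcp x y ↔ w <+: y := by
  obtain ⟨t, rfl⟩ := hw
  induction w generalizing y with
  | nil => simp
  | cons a w ih =>
    cases y with
    | nil => simp [lcp]
    | cons b y =>
      by_cases h : a = b
      · simpa [lcp, h] using ih
      · simp [lcp, h]

theorem lcp_le_length_left (x y : List A) : lcp x y ≤ x.length := by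
  fun_induction lcp x y <;> simp_all

theorem length_take_of_le_lcp {x y : List A} {k : ℕ} (hk : k ≤ lcp x y) : (x.take k).length = k :=
  List.length_take_of_le (hk.trans (lcp_le_length_left x y))

theorem take_prefix_of_le_lcp {x y : List A} {k : ℕ} (hk : k ≤ lcp x y) : x.take k <+: y :=
  (length_le_lcp_iff (List.take_prefix k x)).1 ((length_take_of_le_lcp hk).trans_le hk)

theorem getElem?_lcp_ne {x y : List A} {c : A} (hc : x[lcp x y]? = some c) :
    y[lcp x y]? ≠ some c := by
  induction x generalizing y with
  | nil => simp at hc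
  | cons a x ih =>
    cases y with
    | nil => simp
    | cons b y =>
      by_cases h : a = b
      · simp only [lcp, h, if_true, List.getElem?_cons_succ] at hc ⊢
        exact ih hc
      · simp only [lcp, h, if_false, List.getElem?_cons_zero, ne_eq, Option.some.injEq] at hc ⊢
        exact fun hb => h (hc.trans hb.symm)

theorem length_le_lcs_iff {w x y : List A} (hw : w <:+ x) : w.length ≤ lcs x y ↔ w <:+ y := by
  rw [lcs, ← w.length_reverse, length_le_lcp_iff (List.reverse_prefix.2 hw), List.reverse_prefix]

theorem lcs_le_length_left (x y : List A) : lcs x y ≤ x.length :=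
  (lcp_le_length_left _ _).trans_eq x.length_reverse

end CommonPrefixSuffix

section LongestSuffix

variable {A : Type*} [DecidableEq A] {T w x y : List A}

theorem maxSufLen_le_length (x T : List A) : maxSufLen x T ≤ x.length :=
  Nat.findGreatest_le _

theorem longestSufOcc_suffix (x T : List A) : longestSufOcc x T <:+ x :=
  List.drop_suffix _ _

theorem length_longestSufOcc (x T : List A) : (longestSufOcc x T).length = maxSufLen x T := by
  rw [longestSufOcc, List.length_drop, Nat.sub_sub_self (maxSufLen_le_length x T)]

theorem longestSufOcc_infix (x T : List A) : longestSufOcc x T <:+: T :=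
  Nat.findGreatest_spec (P := fun k => x.drop (x.length - k) <:+: T) (Nat.zero_le _) (by simp)

theorem length_le_maxSufLen_iff (hw : w <:+ x) : w.length ≤ maxSufLen x T ↔ w <:+: T := by
  refine ⟨fun h => ?_, fun h => Nat.le_findGreatest hw.length_le ?_⟩
  · rw [← length_longestSufOcc] at h
    exact (List.suffix_of_suffix_length_le hw (longestSufOcc_suffix x T) h).isInfix.trans
      (longestSufOcc_infix x T)
  · rwa [← List.suffix_iff_eq_drop.1 hw]

theorem suffix_longestSufOcc (hwx : w <:+ x) (hwT : w <:+: T) : w <:+ longestSufOcc x T :=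
  List.suffix_of_suffix_length_le hwx (longestSufOcc_suffix x T) <| by
    rwa [length_longestSufOcc, length_le_maxSufLen_iff hwx]

theorem maxSufLen_append_le (x u T : List A) :
    maxSufLen (x ++ u) T ≤ maxSufLen x T + u.length := by
  by_contra! h
  rw [← length_longestSufOcc (x ++ u)] at h
  obtain ⟨v, hv⟩ := List.suffix_of_suffix_length_le (List.suffix_append x u)
    (longestSufOcc_suffix (x ++ u) T) (by omega)
  have hvx : v <:+ x := List.suffix_append_self_iff.1 (hv ▸ longestSufOcc_suffix (x ++ u) T)
  have hvT : v <:+: T :=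
    (List.prefix_append v u).isInfix.trans (hv ▸ longestSufOcc_infix (x ++ u) T)
  have hle := (length_le_maxSufLen_iff hvx).2 hvT
  rw [← hv, List.length_append] at h
  omega

theorem longestSufOcc_append {u : List A} (h : longestSufOcc x T ++ u <:+: T) :
    longestSufOcc (x ++ u) T = longestSufOcc x T ++ u := by
  have hsuf : longestSufOcc x T ++ u <:+ x ++ u :=
    List.suffix_append_self_iff.2 (longestSufOcc_suffix x T)
  refine ((suffix_longestSufOcc hsuf h).eq_of_length_le ?_).symm
  simpa only [List.length_append, length_longestSufOcc] using maxSufLen_append_le x u T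

theorem lcs_eq_maxSufLen (hy : y <:+: T) (h : longestSufOcc x T <:+ y) :
    lcs x y = maxSufLen x T := by
  apply le_antisymm
  · have hsuf : x.drop (x.length - lcs x y) <:+ x := List.drop_suffix _ _
    have hlen : (x.drop (x.length - lcs x y)).length = lcs x y := by
      rw [List.length_drop, Nat.sub_sub_self (lcs_le_length_left x y)]
    rw [← hlen, length_le_maxSufLen_iff hsuf]
    exact ((length_le_lcs_iff hsuf).1 hlen.le).isInfix.trans hy
  · rwa [← length_longestSufOcc, length_le_lcs_iff (longestSufOcc_suffix x T)]

end LongestSuffix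

section Suffixient

variable {A : Type*} {T w : List A} {c : A} {e : ℕ}

theorem append_suffix_take_add {u : List A} (hw : w <:+ T.take e) (hu : u <+: T.drop e) :
    w ++ u <:+ T.take (e + u.length) := by
  rw [List.take_add, ← List.prefix_iff_eq_take.1 hu]
  exact List.suffix_append_self_iff.2 hw

variable [DecidableEq A]

theorem rightMaximal_nil (hne : T ≠ []) (hn : 2 ≤ T.length)
    (hlast : T.count (T.getLast hne) = 1) : RightMaximal T [] := by
  obtain ⟨a, ha, hne_last⟩ : ∃ a ∈ T, T.getLast hne ≠ a := by
    by_contra! h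
    have := List.count_eq_length.2 h
    omega
  exact ⟨_, a, hne_last, (List.singleton_infix_iff _ _).2 (List.getLast_mem hne),
    (List.singleton_infix_iff _ _).2 ha⟩

theorem eq_nil_of_suffix_of_concat_infix (hne : T ≠ []) (hlast : T.count (T.getLast hne) = 1)
    (hw : w <:+ T) (hwc : w ++ [c] <:+: T) : w = [] := by
  by_contra hw0
  obtain ⟨x, z, hT⟩ := hwc
  have hlast_w : T.getLast hne ∈ w := hw.getLast hw0 ▸ List.getLast_mem hw0
  have hz : [c] ++ z <:+ T := ⟨x ++ w, by simpa using hT⟩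
  have hlast_z : T.getLast hne ∈ [c] ++ z := hz.getLast (by simp) ▸ List.getLast_mem _
  have := List.count_pos_iff.2 hlast_w
  have := List.count_pos_iff.2 hlast_z
  have hcount := congrArg (List.count (T.getLast hne)) hT
  rw [List.append_assoc, List.append_assoc, List.count_append, List.count_append] at hcount
  omega

theorem rightMaximal_of_mismatch (hne : T ≠ []) (hn : 2 ≤ T.length)
    (hlast : T.count (T.getLast hne) = 1) (hw : w <:+ T.take e) (hc : T[e]? ≠ some c)
    (hwc : w ++ [c] <:+: T) : RightMaximal T w := by
  rcases lt_or_ge e T.length with he | he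
  · refine ⟨c, T[e], fun h => hc (by rw [h, List.getElem?_eq_getElem he]), hwc, ?_⟩
    have hnext : [T[e]] <+: T.drop e := ⟨T.drop (e + 1), by simp⟩
    exact (append_suffix_take_add hw hnext).isInfix.trans (List.take_prefix _ _).isInfix
  · rw [List.take_of_length_le he] at hw
    rw [eq_nil_of_suffix_of_concat_infix hne hlast hw hwc]
    exact rightMaximal_nil hne hn hlast

theorem IsSuffixient.longestSufOcc_concat_suffix_take {S : Finset ℕ} (hS : IsSuffixient T S)
    (hne : T ≠ []) (hn : 2 ≤ T.length) (hlast : T.count (T.getLast hne) = 1)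
    {x : List A} {j : ℕ} (hx : longestSufOcc x T <:+ T.take e) (hc : T[e]? ≠ some c)
    (hj : ∀ s ∈ S, lcs (x ++ [c]) (T.take s) ≤ lcs (x ++ [c]) (T.take j)) :
    longestSufOcc (x ++ [c]) T <:+ T.take j := by
  have hocc := longestSufOcc_infix (x ++ [c]) T
  have hsuf := longestSufOcc_suffix (x ++ [c]) T
  rcases List.suffix_concat_iff.1 hsuf with hnil | ⟨w, hw, hwx⟩
  · simp [hnil]
  rw [hw] at hocc hsuf ⊢
  have hwT : w <:+: T := (List.prefix_append w [c]).isInfix.trans hocc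
  obtain ⟨s, hs, hws⟩ := hS.2 w c (rightMaximal_of_mismatch hne hn hlast
    ((suffix_longestSufOcc hwx hwT).trans hx) hc hocc) hocc
  rw [← length_le_lcs_iff hsuf] at hws ⊢
  exact hws.trans (hj s hs)

end Suffixient

section Matching

variable {A : Type*} [DecidableEq A]

/-- The matching statistic of `P` with respect to `T` at position `j`: the length of the longest
suffix of `P[1..j]` that occurs in `T`. -/
def matchLen (T P : List A) (j : ℕ) : ℕ := maxSufLen (P.take j) T

theorem matchLen_le (T P : List A) (j : ℕ) : matchLen T P j ≤ j :=
  (maxSufLen_le_length _ _).trans (List.length_take_le _ _)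

theorem matchLen_succ_pos {T P : List A} (hP : ∀ c ∈ P, [c] <:+: T) {j : ℕ}
    (hj : j < P.length) : 0 < matchLen T P (j + 1) := by
  rw [matchLen, ← List.take_concat_get' P j hj]
  exact (length_le_maxSufLen_iff (List.suffix_append (P.take j) [P[j]])).2
    (hP _ (List.getElem_mem hj))

theorem append_take_suffix_take_add {T w x : List A} {j k : ℕ} (hw : w <:+ T.take j)
    (hk : k ≤ lcp x (T.drop j)) : w ++ x.take k <:+ T.take (j + k) := by
  simpa only [length_take_of_le_lcp hk] using
    append_suffix_take_add hw (take_prefix_of_le_lcp hk)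

theorem longestSufOcc_take_add {T P : List A} {i j k : ℕ}
    (hj : longestSufOcc (P.take i) T <:+ T.take j) (hk : k ≤ lcp (P.drop i) (T.drop j)) :
    longestSufOcc (P.take (i + k)) T = longestSufOcc (P.take i) T ++ (P.drop i).take k := by
  rw [List.take_add]
  exact longestSufOcc_append
    ((append_take_suffix_take_add hj hk).isInfix.trans (List.take_prefix _ _).isInfix)

theorem matchLen_add {T P : List A} {i j k : ℕ}
    (hj : longestSufOcc (P.take i) T <:+ T.take j) (hk : k ≤ lcp (P.drop i) (T.drop j)) :
    matchLen T P (i + k) = matchLen T P i + k := by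
  rw [matchLen, matchLen, ← length_longestSufOcc, longestSufOcc_take_add hj hk,
    List.length_append, length_longestSufOcc, length_take_of_le_lcp hk]

theorem substr_infix_iff (T : List A) {P : List A} {i j : ℕ} (hi : 1 ≤ i) (hj : j ≤ P.length) :
    Substr P i j <:+: T ↔ j + 1 ≤ i + matchLen T P j := by
  rw [Substr, ← length_le_maxSufLen_iff (List.drop_suffix _ _), List.length_drop,
    List.length_take_of_le hj, ← matchLen]
  omega

theorem eq_one_or_not_substr_pred_infix_iff (T : List A) {P : List A} {i j : ℕ} (hi : 1 ≤ i)
    (hj : j ≤ P.length) :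
    (i = 1 ∨ ¬ Substr P (i - 1) j <:+: T) ↔ i + matchLen T P j ≤ j + 1 := by
  rcases hi.eq_or_lt with rfl | hi
  · have := matchLen_le T P j
    exact iff_of_true (Or.inl rfl) (by omega)
  · rw [substr_infix_iff T (by omega) hj]
    omega

theorem eq_length_or_not_substr_succ_infix_iff (T : List A) {P : List A} {i j : ℕ} (hi : 1 ≤ i)
    (hj : j ≤ P.length) :
    (j = P.length ∨ ¬ Substr P i (j + 1) <:+: T) ↔
      j = P.length ∨ i + matchLen T P (j + 1) ≤ j + 1 := by
  rcases hj.eq_or_lt with rfl | hj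
  · simp only [true_or]
  · rw [substr_infix_iff (j := j + 1) T hi hj]
    omega

/-- `j` is the right end of a MEM, if `matchLen T P j` is positive: it is the last position of `P`,
or the matching statistic does not increase from `j` to `j + 1`. -/
abbrev IsMEMEnd (T P : List A) (j : ℕ) : Prop :=
  j = P.length ∨ matchLen T P (j + 1) ≤ matchLen T P j

theorem isMEM_iff {T P : List A} {i j : ℕ} :
    IsMEM T P i j ↔
      0 < matchLen T P j ∧ i + matchLen T P j = j + 1 ∧ j ≤ P.length ∧ IsMEMEnd T P j := by
  have hle := matchLen_le T P j
  constructor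
  · rintro ⟨hi, hij, hj, hocc, hleft, hright⟩
    rw [substr_infix_iff T hi hj] at hocc
    rw [eq_one_or_not_substr_pred_infix_iff T hi hj] at hleft
    rw [eq_length_or_not_substr_succ_infix_iff T hi hj] at hright
    omega
  · rintro ⟨hpos, hstart, hj, hend⟩
    have hi : 1 ≤ i := by omega
    exact ⟨hi, by omega, hj, (substr_infix_iff T hi hj).2 (by omega),
      (eq_one_or_not_substr_pred_infix_iff T hi hj).2 (by omega),
      (eq_length_or_not_substr_succ_infix_iff T hi hj).2 (by omega)⟩

/-- The pairs `(j + 1 - matchLen T P j, j)` for the right ends `j ≥ q`, in increasing order: what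
the MEM-finding algorithm reports from position `q + 1` on. Such a pair is a MEM only if
`matchLen T P j` is positive. -/
def memsFrom (T P : List A) (q : ℕ) : List (ℕ × ℕ) :=
  ((List.Ico q (P.length + 1)).filter (IsMEMEnd T P ·)).map fun j => (j + 1 - matchLen T P j, j)

theorem nodup_memsFrom (T P : List A) (q : ℕ) : (memsFrom T P q).Nodup :=
  ((List.Ico.nodup _ _).filter _).map fun _ _ h => congrArg Prod.snd h

theorem mem_memsFrom_zero_iff {T P : List A} (hm : 1 ≤ P.length) (hP : ∀ c ∈ P, [c] <:+: T)
    {i j : ℕ} : (i, j) ∈ memsFrom T P 0 ↔ IsMEM T P i j := by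
  have hle := matchLen_le T P j
  have hpos : j ≤ P.length → IsMEMEnd T P j → 0 < matchLen T P j := by
    intro hj hend
    cases j with
    | zero =>
      have := matchLen_succ_pos hP hm
      omega
    | succ j => exact matchLen_succ_pos hP hj
  simp only [memsFrom, List.mem_map, List.mem_filter, List.Ico.mem, decide_eq_true_eq,
    Prod.mk.injEq, isMEM_iff]
  constructor
  · rintro ⟨_, ⟨⟨-, hj⟩, hend⟩, rfl, rfl⟩
    exact ⟨hpos (by omega) hend, by omega, by omega, hend⟩
  · rintro ⟨-, hstart, hj, hend⟩
    exact ⟨j, ⟨⟨by omega, by omega⟩, hend⟩, by omega, rfl⟩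

theorem memsFrom_length (T P : List A) :
    memsFrom T P P.length = [(P.length + 1 - matchLen T P P.length, P.length)] := by
  simp [memsFrom, IsMEMEnd]

theorem memsFrom_of_lt (T : List A) {P : List A} {q : ℕ} (hq : q < P.length) :
    memsFrom T P q =
      (if matchLen T P (q + 1) ≤ matchLen T P q then [(q + 1 - matchLen T P q, q)] else []) ++
        memsFrom T P (q + 1) := by
  rw [memsFrom, memsFrom, List.Ico.eq_cons (by omega), List.filter_cons]
  simp only [IsMEMEnd, hq.ne, false_or, decide_eq_true_eq]
  split <;> rfl

theorem memsFrom_add_eq {T P : List A} {q f : ℕ} (hf : q + f ≤ P.length)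
    (hinc : ∀ k ≤ f, matchLen T P (q + k) = matchLen T P q + k) :
    memsFrom T P (q + f) = memsFrom T P q := by
  induction f with
  | zero => rfl
  | succ f ih =>
    have hlt : matchLen T P (q + f) < matchLen T P (q + f + 1) := by
      have := hinc f (by omega)
      have := hinc (f + 1) le_rfl
      rw [← add_assoc] at this
      omega
    rw [← ih (by omega) fun k hk => hinc k (by omega), memsFrom_of_lt (q := q + f) T (by omega),
      if_neg hlt.not_ge, List.nil_append, add_assoc]

/-- The loop invariant of the MEM-finding algorithm at position `q + 1`: some occurrence in `T` of
the longest suffix of `P[1..q]` that occurs in `T`, ending at position `e`, cannot be extended by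
`P[q+1]` (which in 0-based indexing is `P[q]?`, and is absent for `q = |P|`). -/
def HasMismatch (T P : List A) (q : ℕ) : Prop :=
  ∃ e, longestSufOcc (P.take q) T <:+ T.take e ∧ ∀ c, P[q]? = some c → T[e]? ≠ some c

theorem hasMismatch_zero (T P : List A) : HasMismatch T P 0 :=
  ⟨T.length, by simp [longestSufOcc], by simp⟩

theorem hasMismatch_add_lcp {T P : List A} {i j : ℕ}
    (hj : longestSufOcc (P.take i) T <:+ T.take j) :
    HasMismatch T P (i + lcp (P.drop i) (T.drop j)) := by
  refine ⟨j + lcp (P.drop i) (T.drop j), ?_, fun c hc => ?_⟩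
  · rw [longestSufOcc_take_add hj le_rfl]
    exact append_take_suffix_take_add hj le_rfl
  rw [← List.getElem?_drop] at hc ⊢
  exact getElem?_lcp_ne hc

theorem HasMismatch.longestSufOcc_succ_suffix_take {T P : List A} {q j : ℕ}
    (hmis : HasMismatch T P q) (hq : q < P.length)
    (hne : T ≠ []) (hn : 2 ≤ T.length) (hlast : T.count (T.getLast hne) = 1)
    {S : Finset ℕ} (hS : IsSuffixient T S)
    (hj : ∀ s ∈ S, lcs (P.take (q + 1)) (T.take s) ≤ lcs (P.take (q + 1)) (T.take j)) :
    longestSufOcc (P.take (q + 1)) T <:+ T.take j := by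
  obtain ⟨e, hocc, hnext⟩ := hmis
  rw [← List.take_concat_get' P q hq] at hj ⊢
  exact hS.longestSufOcc_concat_suffix_take hne hn hlast hocc
    (hnext _ (List.getElem?_eq_getElem hq)) hj

theorem runAlg_eq_memsFrom {T P : List A} (hne : T ≠ []) (hn : 2 ≤ T.length)
    (hlast : T.count (T.getLast hne) = 1) {S : Finset ℕ} (hS : IsSuffixient T S)
    {ch : ℕ → ℕ → ℕ}
    (hch : ∀ i ℓ, 1 ≤ i → i ≤ P.length →
      ∀ s ∈ S, lcs (P.take i) (T.take s) ≤ lcs (P.take i) (T.take (ch i ℓ)))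
    {q : ℕ} (hq : q ≤ P.length) (hmis : HasMismatch T P q) :
    runAlg T P ch (q + 1) (matchLen T P q) = memsFrom T P q := by
  induction hd : P.length - q using Nat.strong_induction_on generalizing q with
  | _ d ih =>
  rcases hq.eq_or_lt with rfl | hq
  · rw [runAlg, dif_neg (by omega), memsFrom_length, Nat.add_sub_cancel]
  set j := ch (q + 1) (matchLen T P q)
  set f := lcp (P.drop (q + 1)) (T.drop j)
  have hj : longestSufOcc (P.take (q + 1)) T <:+ T.take j :=
    hmis.longestSufOcc_succ_suffix_take hq hne hn hlast hS (hch _ _ (by omega) hq)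
  have hb : lcs (P.take (q + 1)) (T.take j) = matchLen T P (q + 1) :=
    lcs_eq_maxSufLen (List.take_prefix _ _).isInfix hj
  have hinc : ∀ k ≤ f, matchLen T P (q + 1 + k) = matchLen T P (q + 1) + k :=
    fun k hk => matchLen_add hj hk
  have hf : q + 1 + f ≤ P.length := by
    have : f ≤ P.length - (q + 1) := (lcp_le_length_left _ _).trans_eq List.length_drop
    omega
  have hrec := ih _ (by omega) hf (hasMismatch_add_lcp hj) rfl
  rw [hinc f le_rfl] at hrec
  rw [runAlg, dif_pos (Nat.succ_le_of_lt hq), memsFrom_of_lt T hq, ← memsFrom_add_eq hf hinc,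
    ← hrec]
  simp only [hb, Nat.add_sub_cancel, j, f]

end Matching

/-- The MEM-finding algorithm, run on `P`, `T` and a suffixient set `S` with any choice
function `ch` that at each iteration picks a maximizer `j ∈ S` of
`LCS(P[1..i], T[1..s])` over `s ∈ S`, terminates (it is a total function) and the
pairs `(i', j')` it reports are exactly the pairs such that `P[i'..j']` is a MEM of
`P` with respect to `T`, each MEM being reported exactly once. -/
theorem mem_finding_correct {A : Type*} [DecidableEq A] (T : List A)
    (hne : T ≠ []) (hn : 2 ≤ T.length)
    (hlast : T.count (T.getLast hne) = 1)
    (S : Finset ℕ) (hS : IsSuffixient T S)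
    (P : List A) (hm : 1 ≤ P.length) (hP : ∀ c ∈ P, [c] <:+: T)
    (ch : ℕ → ℕ → ℕ)
    (hch : ∀ i ℓ, 1 ≤ i → i ≤ P.length →
      ch i ℓ ∈ S ∧
      ∀ s ∈ S, lcs (P.take i) (T.take s) ≤ lcs (P.take i) (T.take (ch i ℓ))) :
    (runAlg T P ch 1 0).Nodup ∧
    ∀ i' j' : ℕ, (i', j') ∈ runAlg T P ch 1 0 ↔ IsMEM T P i' j' := by
  have hrun : runAlg T P ch 1 0 = memsFrom T P 0 :=
    runAlg_eq_memsFrom hne hn hlast hS (fun i ℓ hi hiP => (hch i ℓ hi hiP).2) (Nat.zero_le _)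
      (hasMismatch_zero T P)
  rw [hrun]
  exact ⟨nodup_memsFrom T P 0, fun i' j' => mem_memsFrom_zero_iff hm hP⟩
end
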